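/- Let m ≥ 2, ℓ ≥ 2, k ≥ 1. Let σ₁ ∈ S_{m,1}^{1≺m}(1324), written in one-line notation as the concatenation π₁ · (1) · (m) · τ₁, where π₁ is the prefix before the entry 1 and τ₁ is the suffix after the entry m. Let σ₂ ∈ S_{ℓ,k}^{1≺ℓ}(1324), written as π₂ · (1) · θ₂ · (ℓ) · τ₂, where π₂ is the prefix before the entry 1, θ₂ is the word strictly between the entries 1 and ℓ, and τ₂ is the suffix after the entry ℓ. Let n = ℓ + m − 1, and let σ₁ ⊙ σ₂ be the word obtained by concatenating: π₂ with every entry increased by m−1, then π₁, then the entry 1, then the entry m, then θ₂ with every entry increased by m−1, then τ₂ with every entry increased by m−1, then τ₁ — where additionally the entry of σ₂ equal to 1 became the entry m and the entry of σ₂ equal to ℓ became the entry n = ℓ+m−1 (so the full word is π̂₂ π₁ 1 m θ̂₂ n τ̂₂ τ₁). Then σ₁ ⊙ σ₂ is a permutation of {1,…,n} and σ₁ ⊙ σ₂ ∈ S_{n,k+1}^{1≺n}(1324). -/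

import Mathlib

/-- A permutation of `{1,…,n}` (encoded as `Equiv.Perm (Fin n)` with 0-based values)
avoids the pattern 1324 if there are no indices `i < j < k < l` with
`σ i < σ k < σ j < σ l`. -/
def Avoids1324 {n : ℕ} (σ : Equiv.Perm (Fin n)) : Prop :=
  ¬ ∃ i j k l : Fin n, i < j ∧ j < k ∧ k < l ∧ σ i < σ k ∧ σ k < σ j ∧ σ j < σ l

/-- The set `S_{n,k}^{a ≺ n}(1324)`: 1324-avoiding permutations with the entry `a`
exactly `k` places to the left of the entry `n`, and the entries `1, …, a-1` all to
the right of `n`.  (Values are 0-based: the entry `a` is `⟨a-1, _⟩`.) -/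
def SPerm (n a k : ℕ) : Set (Equiv.Perm (Fin n)) :=
  {σ | Avoids1324 σ ∧ ∃ hn : n - 1 < n, ∃ ha : a - 1 < n,
    ((σ.symm ⟨n - 1, hn⟩ : Fin n) : ℕ) = ((σ.symm ⟨a - 1, ha⟩ : Fin n) : ℕ) + k ∧
    ∀ b : Fin n, (b : ℕ) + 1 < a → σ.symm ⟨n - 1, hn⟩ < σ.symm b}

/-- One-line notation of a permutation, as a list of 1-based values. -/
def word {n : ℕ} (σ : Equiv.Perm (Fin n)) : List ℕ :=
  List.ofFn fun i => (σ i : ℕ) + 1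

/-! Cut `σ₁ = P m T` at its largest entry and `σ₂ = Q 1 R` at its smallest; the product is
`Q̂ P m R̂ T`. Its entries `≤ m` spell `σ₁` and its entries `≥ m` spell a shift of `σ₂`. A 1324
pattern `a b c d` is therefore excluded unless `a < m < d`. Then `a` lies in `P` and `d` in `R̂`, so
the pattern lies in `P m R̂`, whose entries before `m` are small and whose entries after `m` are
large. As `b > c` is a descent, `b` and `c` lie on the same side of `m`, and replacing
`d` (if they are small) or `a` (if they are large) by `m` gives a 1324 pattern in `σ₁` or `σ₂`. -/

open scoped List

section Sublist

variable {α : Type*}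

lemma cons_sublist_of_sublist_append {x : α} {l u v : List α} (h : x :: l <+ u ++ v)
    (hx : x ∉ u) : x :: l <+ v := by
  obtain ⟨s, t, hst, hs, ht⟩ := List.sublist_append_iff.1 h
  rcases List.cons_eq_append_iff.1 hst with ⟨-, rfl⟩ | ⟨s', rfl, -⟩
  · exact ht
  · exact absurd (hs.mem List.mem_cons_self) hx

lemma concat_sublist_of_sublist_append {x : α} {l u v : List α} (h : l ++ [x] <+ u ++ v)
    (hx : x ∉ v) : l ++ [x] <+ u := by
  rw [← List.reverse_sublist, List.reverse_append] at h ⊢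
  rw [List.reverse_append] at h
  exact cons_sublist_of_sublist_append h (List.mem_reverse.not.2 hx)

lemma sublist_finRange_iff {n : ℕ} {l : List (Fin n)} :
    l <+ List.finRange n ↔ l.Pairwise (· < ·) := by
  refine ⟨fun h => (List.pairwise_lt_finRange n).sublist h, fun h => ?_⟩
  have hsub : l <+~ List.finRange n :=
    List.subperm_of_subset (h.imp Fin.ne_of_lt) fun x _ => List.mem_finRange x
  exact List.sublist_of_subperm_of_sortedLE hsub (h.imp le_of_lt).sortedLE
    (List.sortedLT_finRange n).sortedLE

end Sublist

/-- Avoidance of the pattern 1324 by a word over an ordered alphabet, possibly with repeated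
letters. -/
def WordAvoids1324 {α : Type*} [LT α] (w : List α) : Prop :=
  ∀ a b c d, a < c → c < b → b < d → ¬ [a, b, c, d] <+ w

lemma wordAvoids1324_map_iff {ι α : Type*} [LT α] {f : ι → α} {w : List ι} :
    WordAvoids1324 (w.map f) ↔
      ∀ i j k l, f i < f k → f k < f j → f j < f l → ¬ [i, j, k, l] <+ w := by
  refine ⟨fun h i j k l hik hkj hjl hsub => h _ _ _ _ hik hkj hjl (hsub.map f), ?_⟩
  intro h a b c d hac hcb hbd hsub
  obtain ⟨v, hv, hmap⟩ := List.sublist_map_iff.1 hsub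
  match v, hmap with
  | [i, j, k, l], hmap =>
    obtain ⟨rfl, rfl, rfl, rfl⟩ : a = f i ∧ b = f j ∧ c = f k ∧ d = f l := by simpa using hmap
    exact h i j k l hac hcb hbd hv

namespace WordAvoids1324

lemma map {α β : Type*} [LinearOrder α] [Preorder β] {w : List α} (hw : WordAvoids1324 w)
    {f : α → β} (hf : StrictMono f) : WordAvoids1324 (w.map f) :=
  wordAvoids1324_map_iff.2 fun a b c d hac hcb hbd =>
    hw a b c d (hf.lt_iff_lt.1 hac) (hf.lt_iff_lt.1 hcb) (hf.lt_iff_lt.1 hbd)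

lemma sublist {α : Type*} [LT α] {v w : List α} (hw : WordAvoids1324 w) (h : v <+ w) :
    WordAvoids1324 v :=
  fun a b c d hac hcb hbd hv => hw a b c d hac hcb hbd (hv.trans h)

variable {α : Type*} [LinearOrder α] {m : α} {A P B T : List α}

lemma append_cons (hP : ∀ x ∈ P, x < m) (hB : ∀ x ∈ B, m < x)
    (h₁ : WordAvoids1324 (P ++ [m])) (h₂ : WordAvoids1324 (m :: B)) :
    WordAvoids1324 (P ++ m :: B) := by
  intro a b c d hac hcb hbd h
  rcases lt_or_ge c m with hcm | hmc
  · have hcB : c ∉ m :: B := by grind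
    have habc : [a, b, c] <+ P :=
      concat_sublist_of_sublist_append (l := [a, b])
        ((List.sublist_append_left [a, b, c] [d]).trans h) hcB
    exact h₁ a b c m hac hcb (hP b (habc.mem (by simp))) (habc.append_right [m])
  · have hbP : b ∉ P ++ [m] := by grind
    have hbcd : [b, c, d] <+ B :=
      cons_sublist_of_sublist_append (u := P ++ [m])
        (by simpa using List.sublist_of_cons_sublist h) hbP
    exact h₂ m b c d (hB c (hbcd.mem (by simp))) hcb hbd (hbcd.cons_cons m)

theorem append_append_cons_append (hA : ∀ x ∈ A, m < x) (hP : ∀ x ∈ P, x < m) (hB : ∀ x ∈ B, m < x)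
    (hT : ∀ x ∈ T, x < m) (h₁ : WordAvoids1324 (P ++ m :: T))
    (h₂ : WordAvoids1324 (A ++ m :: B)) :
    WordAvoids1324 (A ++ (P ++ m :: (B ++ T))) := by
  intro a b c d hac hcb hbd h
  by_cases hma : m ≤ a
  · have hge : (A ++ (P ++ m :: (B ++ T))).filter (m ≤ ·) = A ++ m :: B := by
      rw [List.filter_append, List.filter_append, List.filter_cons_of_pos (by simp),
        List.filter_append, List.filter_eq_self.2 (by grind), List.filter_eq_nil_iff.2 (by grind),
        List.filter_eq_self.2 (by grind), List.filter_eq_nil_iff.2 (by grind)]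
      simp
    have hsub := h.filter (m ≤ ·)
    rw [hge, List.filter_eq_self.2 (by grind)] at hsub
    exact h₂ a b c d hac hcb hbd hsub
  by_cases hdm : d ≤ m
  · have hle : (A ++ (P ++ m :: (B ++ T))).filter (· ≤ m) = P ++ m :: T := by
      rw [List.filter_append, List.filter_append, List.filter_cons_of_pos (by simp),
        List.filter_append, List.filter_eq_nil_iff.2 (by grind), List.filter_eq_self.2 (by grind),
        List.filter_eq_nil_iff.2 (by grind), List.filter_eq_self.2 (by grind)]
      simp
    have hsub := h.filter (· ≤ m)
    rw [hle, List.filter_eq_self.2 (by grind)] at hsub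
    exact h₁ a b c d hac hcb hbd hsub
  rw [not_le] at hma hdm
  have hPBT : [a, b, c, d] <+ (P ++ m :: B) ++ T := by
    simpa using cons_sublist_of_sublist_append h fun haA => (hA a haA).not_gt hma
  have hPB : [a, b, c, d] <+ P ++ m :: B :=
    concat_sublist_of_sublist_append (l := [a, b, c]) hPBT fun hdT => (hT d hdT).not_gt hdm
  exact append_cons hP hB (h₁.sublist (by simp)) (h₂.sublist (by simp)) a b c d hac hcb hbd hPB

end WordAvoids1324

section Word

variable {n : ℕ}

lemma avoids1324_iff_wordAvoids1324_word (σ : Equiv.Perm (Fin n)) :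
    Avoids1324 σ ↔ WordAvoids1324 (word σ) := by
  rw [word, List.ofFn_eq_map, wordAvoids1324_map_iff]
  constructor
  · intro hσ i j k l hik hkj hjl hsub
    have hlt := sublist_finRange_iff.1 hsub
    exact hσ ⟨i, j, k, l, by grind, by grind, by grind, by grind⟩
  · rintro hw ⟨i, j, k, l, hij, hjk, hkl, hik, hkj, hjl⟩
    exact hw i j k l (by grind) (by grind) (by grind) (sublist_finRange_iff.2 (by grind))

lemma mem_iff_of_perm_range' {w : List ℕ} (hw : w ~ List.range' 1 n) {x : ℕ} :
    x ∈ w ↔ 1 ≤ x ∧ x ≤ n := by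
  rw [hw.mem_iff, List.mem_range'_1]
  omega

lemma word_perm_range' (σ : Equiv.Perm (Fin n)) : word σ ~ List.range' 1 n := by
  have hid : List.ofFn (fun i : Fin n => (i : ℕ) + 1) = List.range' 1 n :=
    List.ext_getElem (by simp) fun i _ _ => by simp [add_comm]
  exact hid ▸ σ.ofFn_comp_perm fun i => (i : ℕ) + 1

lemma exists_word_eq_of_perm_range' {w : List ℕ} (hw : w ~ List.range' 1 n) :
    ∃ σ : Equiv.Perm (Fin n), word σ = w := by
  obtain rfl : w.length = n := by simpa using hw.length_eq
  have hbound (i : Fin w.length) : 1 ≤ w[i] ∧ w[i] ≤ w.length :=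
    (mem_iff_of_perm_range' hw).1 (List.getElem_mem i.isLt)
  let f (i : Fin w.length) : Fin w.length := ⟨w[i] - 1, by have := hbound i; omega⟩
  have hnodup : w.Nodup := hw.nodup_iff.2 List.nodup_range'
  have hf : Function.Injective f := fun i j hij => by
    have hval : w[i] - 1 = w[j] - 1 := congrArg Fin.val hij
    have heq : w[i] = w[j] := by have := hbound i; have := hbound j; omega
    exact Fin.ext (hnodup.getElem_inj_iff.1 heq)
  refine ⟨Equiv.ofBijective f (Finite.injective_iff_bijective.1 hf), ?_⟩
  refine List.ext_getElem (by simp [word]) fun i _ hi => ?_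
  have := hbound ⟨i, hi⟩
  simp only [word, List.getElem_ofFn, Equiv.ofBijective_apply, f]
  exact Nat.sub_add_cancel this.1

lemma symm_apply_eq_length {σ : Equiv.Perm (Fin n)} {v : Fin n} {s t : List ℕ}
    (h : word σ = s ++ ((v : ℕ) + 1) :: t) : (σ.symm v : ℕ) = s.length := by
  have hs : s.length < n := by
    have hlen : n = s.length + (t.length + 1) := by simpa [word] using congrArg List.length h
    omega
  have hval : (word σ)[s.length]'(by simpa [word] using hs) = v + 1 := by simp [h]
  have hv : σ ⟨s.length, hs⟩ = v := Fin.ext (by simpa [word] using hval)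
  simp [← hv]

lemma symm_lt_symm_iff_mem {σ : Equiv.Perm (Fin n)} {u v : Fin n} {s t : List ℕ}
    (h : word σ = s ++ ((v : ℕ) + 1) :: t) : σ.symm v < σ.symm u ↔ (u : ℕ) + 1 ∈ t := by
  have hv := symm_apply_eq_length h
  rw [Fin.lt_def, hv]
  constructor
  · intro hlt
    have hu : (u : ℕ) + 1 ∈ s ++ ((v : ℕ) + 1) :: t :=
      h ▸ (mem_iff_of_perm_range' (word_perm_range' σ)).2 (by omega)
    rcases List.mem_append.1 hu with hs | ht
    · obtain ⟨p, q, rfl⟩ := List.append_of_mem hs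
      have := symm_apply_eq_length (v := u) (s := p) (by simpa using h)
      simp only [List.length_append] at hlt
      omega
    · rcases List.mem_cons.1 ht with huv | ht
      · obtain rfl : u = v := Fin.ext (by omega)
        omega
      · exact ht
  · intro ht
    obtain ⟨p, q, rfl⟩ := List.append_of_mem ht
    rw [symm_apply_eq_length (v := u) (s := s ++ ((v : ℕ) + 1) :: p) (t := q) (by simpa using h)]
    simp

lemma mem_sPerm_iff {a k : ℕ} {σ : Equiv.Perm (Fin n)} {π θ τ : List ℕ}
    (hw : word σ = π ++ a :: (θ ++ n :: τ)) :
    σ ∈ SPerm n a k ↔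
      WordAvoids1324 (word σ) ∧ θ.length + 1 = k ∧ ∀ b, 1 ≤ b → b < a → b ∈ τ := by
  have ha : 1 ≤ a ∧ a ≤ n := (mem_iff_of_perm_range' (word_perm_range' σ)).1 (by simp [hw])
  obtain ⟨i, rfl⟩ : ∃ i : Fin n, (i : ℕ) + 1 = a := ⟨⟨a - 1, by omega⟩, Nat.sub_add_cancel ha.1⟩
  have hmax : n - 1 < n := by omega
  have hw' : word σ = (π ++ ((i : ℕ) + 1) :: θ) ++ (((⟨n - 1, hmax⟩ : Fin n) : ℕ) + 1) :: τ := by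
    rw [hw, Nat.sub_add_cancel (by omega)]
    simp
  simp only [SPerm, Set.mem_ofPred_eq, ← avoids1324_iff_wordAvoids1324_word, hmax,
    Nat.add_sub_cancel, i.isLt, exists_true_left, symm_apply_eq_length hw,
    symm_apply_eq_length hw', symm_lt_symm_iff_mem hw']
  refine and_congr_right fun _ => and_congr ?_ ⟨fun h b hb hba => ?_, fun h b => h _ (by omega)⟩
  · simp only [List.length_append, List.length_cons]
    omega
  · have hb' : b - 1 + 1 = b := Nat.sub_add_cancel hb
    simpa only [hb'] using h ⟨b - 1, by omega⟩ (by simpa only [hb'] using hba)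

end Word

/-- The word `Q̂ P m R̂ T`, where hats add `m - 1` to every entry: the dot product of `P m T` and
`Q 1 R`, cut at the largest entry `m` of the former and at the smallest entry of the latter. -/
def dotWord (m : ℕ) (P T Q R : List ℕ) : List ℕ :=
  Q.map (· + (m - 1)) ++ (P ++ m :: (R.map (· + (m - 1)) ++ T))

section DotWord

variable {m ℓ : ℕ} {P T Q R : List ℕ}

lemma append_perm_range'_of_max (h : P ++ m :: T ~ List.range' 1 m) :
    P ++ T ~ List.range' 1 (m - 1) := by
  have hm : 1 ≤ m := ((mem_iff_of_perm_range' h).1 (by simp : m ∈ _)).1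
  obtain ⟨p, rfl⟩ : ∃ p, m = p + 1 := ⟨m - 1, by omega⟩
  have hlast : List.range' 1 (p + 1) ~ (p + 1) :: List.range' 1 p := by
    rw [List.range'_concat, one_mul, add_comm 1 p]
    exact List.perm_append_singleton _ _
  exact (List.perm_middle.symm.trans (h.trans hlast)).cons_inv

lemma append_perm_range'_of_min (h : Q ++ 1 :: R ~ List.range' 1 ℓ) :
    Q ++ R ~ List.range' 2 (ℓ - 1) := by
  have hℓ : 1 ≤ ℓ := ((mem_iff_of_perm_range' h).1 (by simp : 1 ∈ _)).2
  obtain ⟨p, rfl⟩ : ∃ p, ℓ = p + 1 := ⟨ℓ - 1, by omega⟩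
  exact (List.perm_middle.symm.trans h).cons_inv

lemma dotWord_perm_range' (h₁ : P ++ m :: T ~ List.range' 1 m)
    (h₂ : Q ++ 1 :: R ~ List.range' 1 ℓ) :
    dotWord m P T Q R ~ List.range' 1 (ℓ + m - 1) := by
  have hℓ : 1 ≤ ℓ := ((mem_iff_of_perm_range' h₂).1 (by simp : 1 ∈ _)).2
  have hm : 1 ≤ m := ((mem_iff_of_perm_range' h₁).1 (by simp : m ∈ _)).1
  have hlarge : (Q ++ R).map (· + (m - 1)) ~ List.range' (m + 1) (ℓ - 1) := by
    have hshift : (List.range' 2 (ℓ - 1)).map (· + (m - 1)) = List.range' (m + 1) (ℓ - 1) := by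
      simp only [add_comm _ (m - 1), List.map_add_range']
      rw [show m - 1 + 2 = m + 1 by omega]
    exact hshift ▸ (append_perm_range'_of_min h₂).map _
  have hsplit : dotWord m P T Q R ~ (P ++ m :: T) ++ (Q ++ R).map (· + (m - 1)) := by
    rw [List.perm_iff_count]
    intro x
    simp only [dotWord, List.map_append, List.count_append, List.count_cons]
    omega
  refine hsplit.trans ((h₁.append hlarge).trans (List.Perm.of_eq ?_))
  rw [add_comm m 1, List.range'_append_1, show m + (ℓ - 1) = ℓ + m - 1 by omega]

lemma wordAvoids1324_dotWord (h₁ : P ++ m :: T ~ List.range' 1 m)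
    (h₂ : Q ++ 1 :: R ~ List.range' 1 ℓ) (av₁ : WordAvoids1324 (P ++ m :: T))
    (av₂ : WordAvoids1324 (Q ++ 1 :: R)) : WordAvoids1324 (dotWord m P T Q R) := by
  have hm : 1 ≤ m := ((mem_iff_of_perm_range' h₁).1 (by simp : m ∈ _)).1
  have hsmall : ∀ x ∈ P ++ T, x < m := fun x hx => by
    have := List.mem_range'_1.1 ((append_perm_range'_of_max h₁).mem_iff.1 hx)
    omega
  have hlarge : ∀ x ∈ (Q ++ R).map (· + (m - 1)), m < x := by
    intro x hx
    obtain ⟨y, hy, rfl⟩ := List.mem_map.1 hx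
    have := List.mem_range'_1.1 ((append_perm_range'_of_min h₂).mem_iff.1 hy)
    omega
  have hshift : (Q ++ 1 :: R).map (· + (m - 1)) =
      Q.map (· + (m - 1)) ++ m :: R.map (· + (m - 1)) := by
    rw [List.map_append, List.map_cons, Nat.add_sub_of_le hm]
  have hmono : StrictMono (· + (m - 1)) := fun x y hxy => Nat.add_lt_add_right hxy _
  have av₂' := hshift ▸ av₂.map hmono
  simp only [List.map_append, List.forall_mem_append] at hsmall hlarge
  exact av₁.append_append_cons_append hlarge.1 hsmall.1 hlarge.2 hsmall.2 av₂'

lemma exists_word_eq_dotWord {σ₁ : Equiv.Perm (Fin m)} {σ₂ : Equiv.Perm (Fin ℓ)}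
    (hw₁ : word σ₁ = P ++ m :: T) (hw₂ : word σ₂ = Q ++ 1 :: R)
    (av₁ : WordAvoids1324 (word σ₁)) (av₂ : WordAvoids1324 (word σ₂)) :
    ∃ σ₃ : Equiv.Perm (Fin (ℓ + m - 1)),
      word σ₃ = dotWord m P T Q R ∧ WordAvoids1324 (word σ₃) := by
  have hp₁ := hw₁ ▸ word_perm_range' σ₁
  have hp₂ := hw₂ ▸ word_perm_range' σ₂
  obtain ⟨σ₃, hσ₃⟩ := exists_word_eq_of_perm_range' (dotWord_perm_range' hp₁ hp₂)
  exact ⟨σ₃, hσ₃, hσ₃ ▸ wordAvoids1324_dotWord hp₁ hp₂ (hw₁ ▸ av₁) (hw₂ ▸ av₂)⟩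

end DotWord

theorem stmt_3_general {m ℓ a j k : ℕ} {σ₁ : Equiv.Perm (Fin m)} {σ₂ : Equiv.Perm (Fin ℓ)}
    (h₁ : σ₁ ∈ SPerm m a j) (h₂ : σ₂ ∈ SPerm ℓ 1 k) {π₁ θ₁ τ₁ π₂ θ₂ τ₂ : List ℕ}
    (hw₁ : word σ₁ = π₁ ++ a :: (θ₁ ++ m :: τ₁))
    (hw₂ : word σ₂ = π₂ ++ 1 :: (θ₂ ++ ℓ :: τ₂)) :
    ∃ σ₃ : Equiv.Perm (Fin (ℓ + m - 1)),
      word σ₃ = π₂.map (· + (m - 1)) ++ π₁ ++ a :: (θ₁ ++ m ::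
        (θ₂.map (· + (m - 1)) ++ (ℓ + m - 1) :: (τ₂.map (· + (m - 1)) ++ τ₁))) ∧
      σ₃ ∈ SPerm (ℓ + m - 1) a (k + j) := by
  obtain ⟨av₁, hj, hbefore⟩ := (mem_sPerm_iff hw₁).1 h₁
  obtain ⟨av₂, hk, -⟩ := (mem_sPerm_iff hw₂).1 h₂
  obtain ⟨σ₃, hσ₃, av₃⟩ := exists_word_eq_dotWord
    (show word σ₁ = (π₁ ++ a :: θ₁) ++ m :: τ₁ by simp [hw₁]) hw₂ av₁ av₂
  have hm : 1 ≤ m :=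
    ((mem_iff_of_perm_range' (word_perm_range' σ₁)).1 (by simp [hw₁] : m ∈ _)).1
  have hw₃ : word σ₃ = π₂.map (· + (m - 1)) ++ π₁ ++ a :: ((θ₁ ++ m :: θ₂.map (· + (m - 1))) ++
      (ℓ + m - 1) :: (τ₂.map (· + (m - 1)) ++ τ₁)) := by
    simp [hσ₃, dotWord, Nat.add_sub_assoc hm]
  refine ⟨σ₃, by simp [hw₃], (mem_sPerm_iff hw₃).2 ⟨av₃, ?_, fun b hb hba => ?_⟩⟩
  · simp only [List.length_append, List.length_cons, List.length_map]
    omega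
  · exact List.mem_append_right _ (hbefore b hb hba)

/-- the dot product of a primitive `σ₁ = π₁ 1 m τ₁ ∈ S_{m,1}^{1≺m}(1324)`
with `σ₂ = π₂ 1 θ₂ ℓ τ₂ ∈ S_{ℓ,k}^{1≺ℓ}(1324)` is the permutation of `{1,…,n}`,
`n = ℓ + m - 1`, whose one-line notation is `π̂₂ π₁ 1 m θ̂₂ n τ̂₂ τ₁` (hats mean all
entries increased by `m - 1`), and it belongs to `S_{n,k+1}^{1≺n}(1324)`. -/
theorem stmt_3 (m ℓ k : ℕ) (hm : 2 ≤ m) (hl : 2 ≤ ℓ) (hk : 1 ≤ k)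
    (σ₁ : Equiv.Perm (Fin m)) (σ₂ : Equiv.Perm (Fin ℓ))
    (h₁ : σ₁ ∈ SPerm m 1 1) (h₂ : σ₂ ∈ SPerm ℓ 1 k)
    (π₁ τ₁ π₂ θ₂ τ₂ : List ℕ)
    (hw₁ : word σ₁ = π₁ ++ 1 :: m :: τ₁)
    (hw₂ : word σ₂ = π₂ ++ 1 :: (θ₂ ++ ℓ :: τ₂)) :
    ∃ σ₃ : Equiv.Perm (Fin (ℓ + m - 1)),
      word σ₃ = π₂.map (· + (m - 1)) ++ π₁ ++ 1 :: m ::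
        (θ₂.map (· + (m - 1)) ++ (ℓ + m - 1) :: (τ₂.map (· + (m - 1)) ++ τ₁)) ∧
      σ₃ ∈ SPerm (ℓ + m - 1) 1 (k + 1) :=
  stmt_3_general (θ₁ := []) h₁ h₂ hw₁ hw₂
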